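/- arXiv:2305.03775 — 7 statements merged into one kernel-verified Lean document; each statement's English description precedes it below -/
import Mathlib

section
/- Let W be an n×n positive semidefinite complex matrix and h ∈ ℂⁿ with hᴴWh ≠ 0. Then the matrix W − (hᴴWh)⁻¹ • ((W h)(W h)ᴴ) is positive semidefinite. -/
/-! With `c = hᴴWh` (real, since `W` is positive semidefinite) and the oblique projection
`P = 1 - c⁻¹ h (Wh)ᴴ`, the matrix in question equals `Pᴴ W P`, a congruence of `W`. -/

open Matrix
open scoped ComplexOrder

/-- Claim (A-5)–(A-7): for a positive semidefinite `W` and a vector `h` with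
`hᴴWh ≠ 0`, the matrix `W − (hᴴWh)⁻¹ • (Wh)(Wh)ᴴ` is positive semidefinite. -/
theorem stmt_2 {n : ℕ} (W : Matrix (Fin n) (Fin n) ℂ) (hW : W.PosSemidef)
    (h : Fin n → ℂ) (hne : star h ⬝ᵥ (W *ᵥ h) ≠ 0) :
    (W - (star h ⬝ᵥ (W *ᵥ h))⁻¹ •
      Matrix.vecMulVec (W *ᵥ h) (star (W *ᵥ h))).PosSemidef := by
  have hc : star (star h ⬝ᵥ (W *ᵥ h)) = star h ⬝ᵥ (W *ᵥ h) :=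
    (IsSelfAdjoint.of_nonneg (hW.dotProduct_mulVec_nonneg h)).star_eq
  have hs : star h ᵥ* W = star (W *ᵥ h) := by
    rw [star_mulVec, hW.isHermitian.eq]
  have key := hW.conjTranspose_mul_mul_same
    (1 - (star h ⬝ᵥ (W *ᵥ h))⁻¹ • vecMulVec h (star (W *ᵥ h)))
  convert key using 1
  generalize hcd : star h ⬝ᵥ (W *ᵥ h) = c at *
  have e : star (W *ᵥ h) ⬝ᵥ h = c := by
    rw [← hs, ← dotProduct_mulVec, hcd]
  simp only [conjTranspose_sub, conjTranspose_one, conjTranspose_smul, conjTranspose_vecMulVec,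
    star_star, star_inv₀, hc, sub_mul, mul_sub, one_mul, mul_one, smul_mul_assoc, mul_smul_comm,
    mul_vecMulVec, vecMulVec_mul, hs, e, smul_smul,
    smul_sub, smul_vecMulVec, vecMulVec_mulVec]
  simp [smul_smul, hne]
end

section
/- Fix integers K, L, n ≥ 1, vectors h_1,…,h_K ∈ ℂⁿ and g_1,…,g_L ∈ ℂⁿ, and reals γ_k > 0 (k = 1,…,K), σ² > 0, q_l > 0 (l = 1,…,L). Suppose the n×n PSD matrices W_1,…,W_K, V are feasible, i.e., for every k: (1/γ_k)·Re(h_kᴴW_kh_k) ≥ Σ_{i≠k} Re(h_kᴴW_ih_k) + Re(h_kᴴVh_k) + σ², and for every l: Σ_{k=1}^{K} Re(g_lᴴW_kg_l) + Re(g_lᴴVg_l) ≥ q_l. Then h_kᴴW_kh_k ≠ 0 for every k, and defining Ŵ_k = (h_kᴴW_kh_k)⁻¹ • ((W_k h_k)(W_k h_k)ᴴ) and V̂ = Σ_{k=1}^{K} W_k + V − Σ_{k=1}^{K} Ŵ_k, the following hold: each Ŵ_k is PSD of rank at most 1; V̂ is PSD; the tuple (Ŵ_1,…,Ŵ_K,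 V̂) is feasible; and Σ_{k=1}^{K} Ŵ_k + V̂ = Σ_{k=1}^{K} W_k + V (so for every PSD matrix P̄ the objective Re Tr(P̄·(Σ_k Ŵ_k + V̂)) equals Re Tr(P̄·(Σ_k W_k + V))). -/
open Matrix
open scoped ComplexOrder

/-!
The construction replaces each `W k` by its compression `W' k = c⁻¹ • (W h)(W h)ᴴ`, where
`c = hᴴ W h`, and moves the remainder `W k - W' k` into the energy matrix. Two facts carry the
argument:

* the remainder `W - W'` kills `h` (`sub_compress_mulVec`), so the useful signal power `hᴴ W h` is
  unchanged by the replacement;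
* the remainder is the congruence `Bᴴ W B` with `B = 1 - c⁻¹ • h (W h)ᴴ`, hence positive
  semidefinite (`posSemidef_sub_compress`), so `V' = V + ∑ (W k - W' k)` is positive semidefinite.

As the total covariance `∑ W k + V` is preserved, so are the harvested powers, the objective, and
the total power received at each user. A SINR constraint only involves that total power and the
useful signal power, so it is preserved too. Positivity of the noise forces `c ≠ 0`.
-/

/-- The rank-one compression `(xᴴ A x)⁻¹ • (A x)(A x)ᴴ` of `A` along `x`. -/
noncomputable def compress {n : ℕ} (A : Matrix (Fin n) (Fin n) ℂ) (x : Fin n → ℂ) :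
    Matrix (Fin n) (Fin n) ℂ :=
  (star x ⬝ᵥ (A *ᵥ x))⁻¹ • vecMulVec (A *ᵥ x) (star (A *ᵥ x))

theorem posSemidef_compress {n : ℕ} {A : Matrix (Fin n) (Fin n) ℂ} (hA : A.PosSemidef)
    (x : Fin n → ℂ) : (compress A x).PosSemidef :=
  (posSemidef_vecMulVec_self_star _).smul (inv_nonneg.mpr (hA.dotProduct_mulVec_nonneg x))

theorem rank_compress_le {n : ℕ} (A : Matrix (Fin n) (Fin n) ℂ) (x : Fin n → ℂ) :
    (compress A x).rank ≤ 1 := by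
  rw [compress, ← smul_vecMulVec]
  exact rank_vecMulVec_le _ _

theorem star_mulVec_dotProduct_self {n : ℕ} {A : Matrix (Fin n) (Fin n) ℂ} (hA : A.IsHermitian)
    (x : Fin n → ℂ) : star (A *ᵥ x) ⬝ᵥ x = star x ⬝ᵥ (A *ᵥ x) := by
  rw [star_mulVec, hA.eq, dotProduct_mulVec]

theorem sub_compress_mulVec {n : ℕ} {A : Matrix (Fin n) (Fin n) ℂ} (hA : A.IsHermitian)
    {x : Fin n → ℂ} (hc : star x ⬝ᵥ (A *ᵥ x) ≠ 0) : (A - compress A x) *ᵥ x = 0 := by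
  rw [sub_mulVec, compress, smul_mulVec, vecMulVec_mulVec, star_mulVec_dotProduct_self hA,
    op_smul_eq_smul, smul_smul, inv_mul_cancel₀ hc, one_smul, sub_self]

theorem posSemidef_sub_compress {n : ℕ} {A : Matrix (Fin n) (Fin n) ℂ} (hA : A.PosSemidef)
    {x : Fin n → ℂ} (hc : star x ⬝ᵥ (A *ᵥ x) ≠ 0) : (A - compress A x).PosSemidef := by
  set B : Matrix (Fin n) (Fin n) ℂ :=
    1 - (star x ⬝ᵥ (A *ᵥ x))⁻¹ • vecMulVec x (star (A *ᵥ x)) with hB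
  have hAB : A * B = A - compress A x := by
    rw [hB, mul_sub, mul_one, mul_smul_comm, mul_vecMulVec, compress]
  -- The rank-one term of `B` contributes nothing, since `(A - compress A x) x = 0`.
  have hBD : (A - compress A x) * B = A - compress A x := by
    rw [hB, mul_sub, mul_one, mul_smul_comm, mul_vecMulVec, sub_compress_mulVec hA.1 hc,
      zero_vecMulVec, smul_zero, sub_zero]
  have hD : (A - compress A x).IsHermitian := hA.1.sub (posSemidef_compress hA x).1
  have key : Bᴴ * A * B = A - compress A x := by
    rw [mul_assoc, hAB]
    have := congrArg conjTranspose hBD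
    rwa [conjTranspose_mul, hD.eq] at this
  rw [← key]
  exact hA.conjTranspose_mul_mul_same B

/-- Proposition 1: from any feasible solution `(W_1,…,W_K, V)` of the relaxed SDP (P1.2)
one can construct rank-one information matrices `W'_k = (h_kᴴW_kh_k)⁻¹ • (W_kh_k)(W_kh_k)ᴴ`
and a PSD energy matrix `V' = Σ_k W_k + V − Σ_k W'_k` that remain feasible and achieve
the same objective value. -/
theorem stmt_4 {K L n : ℕ} (hK : 1 ≤ K) (hL : 1 ≤ L) (hn : 1 ≤ n)
    (h : Fin K → Fin n → ℂ) (g : Fin L → Fin n → ℂ)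
    (γ : Fin K → ℝ) (hγ : ∀ k, 0 < γ k) (σ2 : ℝ) (hσ : 0 < σ2)
    (q : Fin L → ℝ) (hq : ∀ l, 0 < q l)
    (W : Fin K → Matrix (Fin n) (Fin n) ℂ) (V : Matrix (Fin n) (Fin n) ℂ)
    (hW : ∀ k, (W k).PosSemidef) (hV : V.PosSemidef)
    (hSINR : ∀ k, (1 / γ k) * (star (h k) ⬝ᵥ ((W k) *ᵥ (h k))).re ≥
      (∑ i ∈ Finset.univ.erase k, (star (h k) ⬝ᵥ ((W i) *ᵥ (h k))).re) +
        (star (h k) ⬝ᵥ (V *ᵥ (h k))).re + σ2)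
    (hEH : ∀ l, (∑ k, (star (g l) ⬝ᵥ ((W k) *ᵥ (g l))).re) +
      (star (g l) ⬝ᵥ (V *ᵥ (g l))).re ≥ q l) :
    (∀ k, star (h k) ⬝ᵥ ((W k) *ᵥ (h k)) ≠ 0) ∧
    ∀ (W' : Fin K → Matrix (Fin n) (Fin n) ℂ) (V' : Matrix (Fin n) (Fin n) ℂ),
      (∀ k, W' k = (star (h k) ⬝ᵥ ((W k) *ᵥ (h k)))⁻¹ •
        Matrix.vecMulVec ((W k) *ᵥ (h k)) (star ((W k) *ᵥ (h k)))) →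
      (V' = (∑ k, W k) + V - ∑ k, W' k) →
      (∀ k, (W' k).PosSemidef ∧ (W' k).rank ≤ 1) ∧
      V'.PosSemidef ∧
      (∀ k, (1 / γ k) * (star (h k) ⬝ᵥ ((W' k) *ᵥ (h k))).re ≥
        (∑ i ∈ Finset.univ.erase k, (star (h k) ⬝ᵥ ((W' i) *ᵥ (h k))).re) +
          (star (h k) ⬝ᵥ (V' *ᵥ (h k))).re + σ2) ∧
      (∀ l, (∑ k, (star (g l) ⬝ᵥ ((W' k) *ᵥ (g l))).re) +
        (star (g l) ⬝ᵥ (V' *ᵥ (g l))).re ≥ q l) ∧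
      ((∑ k, W' k) + V' = (∑ k, W k) + V) ∧
      (∀ P : Matrix (Fin n) (Fin n) ℂ, P.PosSemidef →
        (Matrix.trace (P * ((∑ k, W' k) + V'))).re =
          (Matrix.trace (P * ((∑ k, W k) + V))).re) := by
  have hc : ∀ k, star (h k) ⬝ᵥ ((W k) *ᵥ (h k)) ≠ 0 := by
    intro k h0
    have h1 := hSINR k
    rw [h0, Complex.zero_re, mul_zero] at h1
    have h2 : 0 ≤ ∑ i ∈ Finset.univ.erase k, (star (h k) ⬝ᵥ ((W i) *ᵥ (h k))).re :=
      Finset.sum_nonneg fun i _ => (Complex.le_def.mp ((hW i).dotProduct_mulVec_nonneg (h k))).1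
    have h3 : 0 ≤ (star (h k) ⬝ᵥ (V *ᵥ (h k))).re :=
      (Complex.le_def.mp (hV.dotProduct_mulVec_nonneg (h k))).1
    linarith
  refine ⟨hc, fun W' V' hW' hV' => ?_⟩
  replace hW' : ∀ k, W' k = compress (W k) (h k) := hW'
  have htot : (∑ k, W' k) + V' = (∑ k, W k) + V := by rw [hV']; abel
  -- The total power received along any vector is unchanged.
  have hpow : ∀ x : Fin n → ℂ,
      (∑ k, (star x ⬝ᵥ ((W' k) *ᵥ x)).re) + (star x ⬝ᵥ (V' *ᵥ x)).re =
        (∑ k, (star x ⬝ᵥ ((W k) *ᵥ x)).re) + (star x ⬝ᵥ (V *ᵥ x)).re := by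
    intro x
    have := congrArg (fun M => (star x ⬝ᵥ (M *ᵥ x)).re) htot
    simpa only [add_mulVec, sum_mulVec, dotProduct_add, dotProduct_sum, Complex.add_re,
      Complex.re_sum] using this
  have hsig : ∀ k, star (h k) ⬝ᵥ ((W' k) *ᵥ (h k)) = star (h k) ⬝ᵥ ((W k) *ᵥ (h k)) := by
    intro k
    have := sub_compress_mulVec (hW k).1 (hc k)
    rw [sub_mulVec, sub_eq_zero] at this
    rw [hW', ← this]
  refine ⟨fun k => ?_, ?_, fun k => ?_, fun l => ?_, htot, fun P _ => by rw [htot]⟩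
  · rw [hW']
    exact ⟨posSemidef_compress (hW k) _, rank_compress_le _ _⟩
  · have hV'' : V' = V + ∑ k, (W k - compress (W k) (h k)) := by
      rw [hV', Finset.sum_sub_distrib, Finset.sum_congr rfl fun k _ => hW' k]
      abel
    rw [hV'']
    exact hV.add (posSemidef_sum _ fun k _ => posSemidef_sub_compress (hW k) (hc k))
  · have h1 := hSINR k
    have h2 := hpow (h k)
    rw [← Finset.add_sum_erase _ _ (Finset.mem_univ k),
      ← Finset.add_sum_erase _ _ (Finset.mem_univ k), hsig k] at h2
    rw [hsig k]
    linarith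
  · rw [hpow]
    exact hEH l
end

section
/- Fix integers K, L, n ≥ 1, vectors h_1,…,h_K ∈ ℂⁿ and g_1,…,g_L ∈ ℂⁿ, and reals γ_k > 0 (k = 1,…,K), σ² > 0, q_l > 0 (l = 1,…,L). Suppose the n×n PSD matrices Ŵ_1,…,Ŵ_K, V̂ are feasible, i.e., for every k: (1/γ_k)·Re(h_kᴴŴ_kh_k) ≥ Σ_{i≠k} Re(h_kᴴŴ_ih_k) + Re(h_kᴴV̂h_k) + σ², and for every l: Σ_{k=1}^{K} Re(g_lᴴŴ_kg_l) + Re(g_lᴴV̂g_l) ≥ q_l. Let α_1,…,α_K be nonnegative reals with Σ_{k=1}^{K} α_k = 1, and define W̃_k = Ŵ_k + α_k • V̂. Then: each W̃_k is PSD; Σ_{k=1}^{K} W̃_k = Σ_{k=1}^{K} Ŵ_k + V̂; and the tuple (W̃_1,…,W̃_K, 0) is feasible (with the zero matrix in place of V̂), achieving for every PSD matrix P̄ the same objective Re Tr(P̄·Σ_k W̃_k) = Re Tr(P̄·(Σ_k Ŵ_k + V̂)). -/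
/-!
The total transmit covariance `∑ k, Wt k` equals `∑ k, W' k + V'` since the weights sum to one, so
the harvested powers and the objective do not change. For the signal-to-interference constraints,
the quadratic form of `Wt k` at `x` is that of `W' k` plus `α k` times that of `V'`; as the latter
is nonnegative, the useful signal of each user does not decrease, and the interference caused by
`V'` is scaled by `∑ i ≠ k, α i ≤ 1`.
-/

open Matrix
open scoped ComplexOrder

/-- Proposition 2: given a feasible solution `(Ŵ_1,…,Ŵ_K, V̂)` of the relaxed SDP (P1.2)
and a convex combination `α`, the matrices `W̃_k = Ŵ_k + α_k • V̂` are PSD, sum to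
`Σ_k Ŵ_k + V̂`, and together with the zero energy matrix remain feasible with the same
objective value for any PSD weighting matrix `P̄`. -/
theorem stmt_5 {K L n : ℕ} (hK : 1 ≤ K) (hL : 1 ≤ L) (hn : 1 ≤ n)
    (h : Fin K → Fin n → ℂ) (g : Fin L → Fin n → ℂ)
    (γ : Fin K → ℝ) (hγ : ∀ k, 0 < γ k) (σ2 : ℝ) (hσ : 0 < σ2)
    (q : Fin L → ℝ) (hq : ∀ l, 0 < q l)
    (W' : Fin K → Matrix (Fin n) (Fin n) ℂ) (V' : Matrix (Fin n) (Fin n) ℂ)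
    (hW' : ∀ k, (W' k).PosSemidef) (hV' : V'.PosSemidef)
    (hSINR : ∀ k, (1 / γ k) * (star (h k) ⬝ᵥ ((W' k) *ᵥ (h k))).re ≥
      (∑ i ∈ Finset.univ.erase k, (star (h k) ⬝ᵥ ((W' i) *ᵥ (h k))).re) +
        (star (h k) ⬝ᵥ (V' *ᵥ (h k))).re + σ2)
    (hEH : ∀ l, (∑ k, (star (g l) ⬝ᵥ ((W' k) *ᵥ (g l))).re) +
      (star (g l) ⬝ᵥ (V' *ᵥ (g l))).re ≥ q l)
    (α : Fin K → ℝ) (hα : ∀ k, 0 ≤ α k) (hαsum : ∑ k, α k = 1) :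
    ∀ Wt : Fin K → Matrix (Fin n) (Fin n) ℂ,
      (∀ k, Wt k = W' k + α k • V') →
      (∀ k, (Wt k).PosSemidef) ∧
      ((∑ k, Wt k) = (∑ k, W' k) + V') ∧
      (∀ k, (1 / γ k) * (star (h k) ⬝ᵥ ((Wt k) *ᵥ (h k))).re ≥
        (∑ i ∈ Finset.univ.erase k, (star (h k) ⬝ᵥ ((Wt i) *ᵥ (h k))).re) +
          (star (h k) ⬝ᵥ ((0 : Matrix (Fin n) (Fin n) ℂ) *ᵥ (h k))).re + σ2) ∧
      (∀ l, (∑ k, (star (g l) ⬝ᵥ ((Wt k) *ᵥ (g l))).re) +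
        (star (g l) ⬝ᵥ ((0 : Matrix (Fin n) (Fin n) ℂ) *ᵥ (g l))).re ≥ q l) ∧
      (∀ P : Matrix (Fin n) (Fin n) ℂ, P.PosSemidef →
        (Matrix.trace (P * (∑ k, Wt k))).re =
          (Matrix.trace (P * ((∑ k, W' k) + V'))).re) := by
  intro Wt hWt
  have hquad : ∀ (x : Fin n → ℂ) (k : Fin K), (star x ⬝ᵥ ((Wt k) *ᵥ x)).re =
      (star x ⬝ᵥ ((W' k) *ᵥ x)).re + α k * (star x ⬝ᵥ (V' *ᵥ x)).re := by
    intro x k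
    rw [hWt, add_mulVec, smul_mulVec, dotProduct_add, dotProduct_smul, Complex.add_re,
      Complex.smul_re, smul_eq_mul]
  have hsum : (∑ k, Wt k) = (∑ k, W' k) + V' := by
    simp_rw [hWt]
    rw [Finset.sum_add_distrib, ← Finset.sum_smul, hαsum, one_smul]
  refine ⟨fun k => ?_, hsum, fun k => ?_, fun l => ?_, fun P _ => by rw [hsum]⟩
  · rw [hWt]
    exact (hW' k).add (hV'.smul (hα k))
  · have hv : 0 ≤ (star (h k) ⬝ᵥ (V' *ᵥ (h k))).re := hV'.re_dotProduct_nonneg (h k)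
    have hα_erase : ∑ i ∈ Finset.univ.erase k, α i ≤ 1 :=
      hαsum ▸ Finset.sum_le_sum_of_subset_of_nonneg (Finset.erase_subset _ _) fun i _ _ => hα i
    -- Let `v ≥ 0` be the quadratic form of the energy matrix at `h k`. The useful signal
    -- gains `α k * v / γ k ≥ 0`, and the energy interference drops from `v` to
    -- `(∑ i ≠ k, α i) * v`.
    have hgain := mul_nonneg (one_div_pos.mpr (hγ k)).le (mul_nonneg (hα k) hv)
    have hloss := mul_le_mul_of_nonneg_right hα_erase hv
    have hk := hSINR k
    simp_rw [hquad]
    rw [Finset.sum_add_distrib, ← Finset.sum_mul, mul_add, zero_mulVec, dotProduct_zero,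
      Complex.zero_re]
    linarith
  · have hl := hEH l
    simp_rw [hquad]
    rw [Finset.sum_add_distrib, ← Finset.sum_mul, hαsum, zero_mulVec, dotProduct_zero,
      Complex.zero_re]
    linarith
end

section
/- Fix integers K, L, n ≥ 1, vectors h_1,…,h_K ∈ ℂⁿ and g_1,…,g_L ∈ ℂⁿ, reals γ_k > 0 (k = 1,…,K), σ² > 0, q_l > 0 (l = 1,…,L), and a PSD n×n matrix P̄. Let S be the set of tuples (W_1,…,W_K, V) of n×n PSD matrices satisfying, for every k: (1/γ_k)·Re(h_kᴴW_kh_k) ≥ Σ_{i≠k} Re(h_kᴴW_ih_k) + Re(h_kᴴVh_k) + σ², and for every l: Σ_{k=1}^{K} Re(g_lᴴW_kg_l) + Re(g_lᴴVg_l) ≥ q_l. Then the infimum of the objective Re Tr(P̄·(Σ_{k=1}^{K} W_k + V)) over S equals the infimum of the same objective over the subset S₀ = {(W_1,…,W_K, V) ∈ S : V = 0}. -/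
/-!
Adding the energy matrix `V` to the information matrix of one fixed user `k₀` and replacing `V`
by `0` leaves the total `∑ k, W k + V`, hence the objective and all harvested powers, unchanged.
At every user other than `k₀` the power of `V` is merely counted as interference from `k₀`, so the
SINR constraint is unchanged; at `k₀` the power of `V` moves from interference to signal, which
only helps since `V` is positive semidefinite. Hence the two sets of attainable objective values
coincide, and so do their infima, without any appeal to attainment or nonemptiness.
-/

open Matrix
open scoped ComplexOrder

/-- Main structural conclusion of Section III: the infimum of the transmit-power
objective `Re Tr(P̄·(Σ_k W_k + V))` over all feasible PSD tuples `(W_1,…,W_K, V)`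
of the relaxed SDP (P1.2) equals the infimum over the feasible tuples with `V = 0`:
no dedicated energy beams are required in near-field SWIPT. -/
theorem stmt_6 {K L n : ℕ} (hK : 1 ≤ K) (hL : 1 ≤ L) (hn : 1 ≤ n)
    (h : Fin K → Fin n → ℂ) (g : Fin L → Fin n → ℂ)
    (γ : Fin K → ℝ) (hγ : ∀ k, 0 < γ k) (σ2 : ℝ) (hσ : 0 < σ2)
    (q : Fin L → ℝ) (hq : ∀ l, 0 < q l)
    (P : Matrix (Fin n) (Fin n) ℂ) (hP : P.PosSemidef) :
    sInf {c : ℝ | ∃ (W : Fin K → Matrix (Fin n) (Fin n) ℂ)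
        (V : Matrix (Fin n) (Fin n) ℂ),
      (∀ k, (W k).PosSemidef) ∧ V.PosSemidef ∧
      (∀ k, (1 / γ k) * (star (h k) ⬝ᵥ ((W k) *ᵥ (h k))).re ≥
        (∑ i ∈ Finset.univ.erase k, (star (h k) ⬝ᵥ ((W i) *ᵥ (h k))).re) +
          (star (h k) ⬝ᵥ (V *ᵥ (h k))).re + σ2) ∧
      (∀ l, (∑ k, (star (g l) ⬝ᵥ ((W k) *ᵥ (g l))).re) +
        (star (g l) ⬝ᵥ (V *ᵥ (g l))).re ≥ q l) ∧
      c = (Matrix.trace (P * ((∑ k, W k) + V))).re}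
    =
    sInf {c : ℝ | ∃ (W : Fin K → Matrix (Fin n) (Fin n) ℂ)
        (V : Matrix (Fin n) (Fin n) ℂ),
      (∀ k, (W k).PosSemidef) ∧ V.PosSemidef ∧
      (∀ k, (1 / γ k) * (star (h k) ⬝ᵥ ((W k) *ᵥ (h k))).re ≥
        (∑ i ∈ Finset.univ.erase k, (star (h k) ⬝ᵥ ((W i) *ᵥ (h k))).re) +
          (star (h k) ⬝ᵥ (V *ᵥ (h k))).re + σ2) ∧
      (∀ l, (∑ k, (star (g l) ⬝ᵥ ((W k) *ᵥ (g l))).re) +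
        (star (g l) ⬝ᵥ (V *ᵥ (g l))).re ≥ q l) ∧
      V = 0 ∧
      c = (Matrix.trace (P * ((∑ k, W k) + V))).re} := by
  congr 1
  ext c
  constructor
  · rintro ⟨W, V, hW, hV, hS, hE, rfl⟩
    set k₀ : Fin K := ⟨0, hK⟩
    have hq0 : ∀ x : Fin n → ℂ, 0 ≤ (star x ⬝ᵥ (V *ᵥ x)).re := fun x =>
      (Complex.le_def.mp (hV.dotProduct_mulVec_nonneg x)).1
    have hquad : ∀ (k : Fin K) (x : Fin n → ℂ),
        (star x ⬝ᵥ ((W k + if k = k₀ then V else 0) *ᵥ x)).re =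
          (star x ⬝ᵥ (W k *ᵥ x)).re + if k = k₀ then (star x ⬝ᵥ (V *ᵥ x)).re else 0 := by
      intro k x
      split_ifs <;> simp [add_mulVec]
    refine ⟨fun k => W k + if k = k₀ then V else 0, 0, ?_, PosSemidef.zero, ?_, ?_, rfl, ?_⟩
    · intro k
      refine (hW k).add ?_
      split_ifs
      · exact hV
      · exact PosSemidef.zero
    · intro k
      have hk := hS k
      simp only [hquad, Finset.sum_add_distrib, Finset.sum_ite_eq', Finset.mem_erase,
        Finset.mem_univ, and_true, zero_mulVec, dotProduct_zero, Complex.zero_re, ne_eq]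
      have hpos := hq0 (h k)
      by_cases hkk : k = k₀
      · have hm := mul_nonneg (one_div_pos.mpr (hγ k)).le hpos
        rw [if_pos hkk, if_neg (not_not.mpr hkk.symm), mul_add]
        linarith
      · rw [if_neg hkk, if_pos (Ne.symm hkk)]
        linarith
    · intro l
      simpa [hquad, Finset.sum_add_distrib] using hE l
    · simp [Finset.sum_add_distrib]
  · rintro ⟨W, V, hW, hV, hS, hE, -, hc⟩
    exact ⟨W, V, hW, hV, hS, hE, hc⟩
end

section
/- Let T be an n×b complex matrix, M a Hermitian b×b complex matrix, and δ > 0 a real number such that δ•I − M is positive semidefinite and det(δ•I − M) = 0. Define W̆ = T·(I − δ⁻¹•M)·Tᴴ. Then: (a) W̆ is positive semidefinite; (b) rank(W̆) ≤ b − 1; and (c) for every n×n complex matrix A with Tr(Tᴴ·A·T·M) = 0, one has Tr(A·W̆) = Tr(A·T·Tᴴ). -/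
/-!
Write `N = δ • 1 - M`, so that `1 - δ⁻¹ • M = δ⁻¹ • N` and `W̆ = T (δ⁻¹ • N) Tᴴ`. Positivity holds
because `δ⁻¹ > 0` and congruence preserves semidefiniteness. The rank of the product is at most
that of `δ⁻¹ • N`, which is singular because `N` is. Finally, by cyclicity of the trace,
`Tr(A W̆) = Tr(A T Tᴴ) - δ⁻¹ Tr(Tᴴ A T M)`.
-/

open Matrix
open scoped ComplexOrder

/-- A singular `b × b` matrix has a nontrivial kernel, so rank–nullity bounds its rank. The
truncated subtraction is harmless: for `b = 0` the determinant is `1`. -/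
lemma rank_le_pred_of_det_eq_zero {b : ℕ} (N : Matrix (Fin b) (Fin b) ℂ) (h : N.det = 0) :
    N.rank ≤ b - 1 := by
  obtain ⟨v, hv, hNv⟩ := Matrix.exists_mulVec_eq_zero_iff.mpr h
  have hker : LinearMap.ker N.mulVecLin ≠ ⊥ := fun hbot =>
    hv (LinearMap.ker_eq_bot'.mp hbot v hNv)
  have hpos := Submodule.one_le_finrank_iff.mpr hker
  have hrn := LinearMap.finrank_range_add_finrank_ker N.mulVecLin
  rw [Module.finrank_fin_fun] at hrn
  unfold Matrix.rank
  omega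

/-- Rank-reduction construction (25)–(26) of Proposition 3: if `δ > 0` is the largest
eigenvalue of the Hermitian matrix `M` (i.e. `δ•I − M` is PSD and singular), then
`W̆ = T(I − δ⁻¹•M)Tᴴ` is PSD, has rank at most `b − 1`, and preserves every trace
constraint `A` whose compression satisfies `Tr(TᴴATM) = 0`. -/
theorem stmt_9 {n b : ℕ} (T : Matrix (Fin n) (Fin b) ℂ)
    (M : Matrix (Fin b) (Fin b) ℂ) (hM : M.IsHermitian)
    (δ : ℝ) (hδ : 0 < δ)
    (hpsd : (δ • (1 : Matrix (Fin b) (Fin b) ℂ) - M).PosSemidef)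
    (hdet : (δ • (1 : Matrix (Fin b) (Fin b) ℂ) - M).det = 0) :
    ∀ Wb : Matrix (Fin n) (Fin n) ℂ,
      Wb = T * ((1 : Matrix (Fin b) (Fin b) ℂ) - δ⁻¹ • M) * Tᴴ →
      Wb.PosSemidef ∧ Wb.rank ≤ b - 1 ∧
      ∀ A : Matrix (Fin n) (Fin n) ℂ,
        Matrix.trace (Tᴴ * A * T * M) = 0 →
        Matrix.trace (A * Wb) = Matrix.trace (A * (T * Tᴴ)) := by
  rintro Wb rfl
  have hN : (1 : Matrix (Fin b) (Fin b) ℂ) - δ⁻¹ • M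
      = δ⁻¹ • (δ • (1 : Matrix (Fin b) (Fin b) ℂ) - M) := by
    rw [smul_sub, smul_smul, inv_mul_cancel₀ hδ.ne', one_smul]
  refine ⟨?_, ?_, ?_⟩
  · rw [hN]
    exact (hpsd.smul (inv_nonneg.mpr hδ.le)).mul_mul_conjTranspose_same T
  · refine (Matrix.rank_mul_le_left _ _).trans ((Matrix.rank_mul_le_right _ _).trans ?_)
    apply rank_le_pred_of_det_eq_zero
    rw [hN, Matrix.det_smul_of_tower, hdet, smul_zero]
  · intro A hA
    have hcyc : Matrix.trace (A * (T * M * Tᴴ)) = 0 := by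
      rw [← hA, ← Matrix.mul_assoc, Matrix.trace_mul_comm]
      simp only [Matrix.mul_assoc]
    rw [Matrix.mul_sub, Matrix.mul_one, Matrix.sub_mul, Matrix.mul_sub, Matrix.trace_sub,
      Matrix.mul_smul, Matrix.smul_mul, Matrix.mul_smul, Matrix.trace_smul, hcyc, smul_zero,
      sub_zero]
end

section
/- Let A be an n×n positive semidefinite complex matrix and w ∈ ℂⁿ a vector such that wwᴴ − A is positive semidefinite. Then there exists a real number α with 0 ≤ α ≤ 1 and A = α • (wwᴴ). -/
open Matrix
open scoped ComplexOrder

/-!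
The domination `A ≤ wwᴴ` forces `A` to vanish on the orthogonal complement of `w`: if `wᴴx = 0`
then `0 ≤ xᴴAx ≤ |wᴴx|² = 0`, hence `Ax = 0`. Fix an index `k` with `w k ≠ 0`. Applying this to
`x = conj (w k) • e_i - conj (w i) • e_k` expresses every column of `A` through column `k`, and by
Hermitian symmetry `A j i * |w k|² = A k k * (w j * conj (w i))`. So `α = A k k / |w k|²` works;
its bounds are the nonnegativity of the `k`-th diagonal entries of `A` and `wwᴴ - A`.
-/

/-- A positive semidefinite matrix dominated by `wwᴴ` annihilates the orthogonal complement
of `w`. -/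
lemma mulVec_eq_zero_of_dominated {n : ℕ} {A : Matrix (Fin n) (Fin n) ℂ} (hA : A.PosSemidef)
    {w : Fin n → ℂ} (hdom : (Matrix.vecMulVec w (star w) - A).PosSemidef)
    {x : Fin n → ℂ} (hx : star w ⬝ᵥ x = 0) : A *ᵥ x = 0 := by
  rw [← hA.dotProduct_mulVec_zero_iff]
  have h1 := hA.dotProduct_mulVec_nonneg x
  have h2 := hdom.dotProduct_mulVec_nonneg x
  rw [sub_mulVec, vecMulVec_mulVec, hx] at h2
  simp only [MulOpposite.op_zero, zero_smul, zero_sub, dotProduct_neg] at h2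
  exact le_antisymm (neg_nonneg.mp h2) h1

/-- A PSD matrix dominated by a rank-one PSD matrix `wwᴴ` is a nonnegative multiple
`α • wwᴴ` of it, with `0 ≤ α ≤ 1` (used in the analysis of equation (29)). -/
theorem stmt_11 {n : ℕ} (A : Matrix (Fin n) (Fin n) ℂ) (hA : A.PosSemidef)
    (w : Fin n → ℂ)
    (hdom : (Matrix.vecMulVec w (star w) - A).PosSemidef) :
    ∃ α : ℝ, 0 ≤ α ∧ α ≤ 1 ∧ A = α • Matrix.vecMulVec w (star w) := by
  by_cases hw : w = 0
  · refine ⟨0, le_rfl, zero_le_one, ?_⟩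
    rw [zero_smul]
    refine ext_of_mulVec_single fun i => ?_
    rw [zero_mulVec]
    exact mulVec_eq_zero_of_dominated hA hdom (by simp [hw])
  · obtain ⟨k, hk⟩ := Function.ne_iff.mp hw
    have hk : w k ≠ 0 := hk
    have hcol : ∀ j i, A j i * star (w k) = A j k * star (w i) := by
      intro j i
      have h := mulVec_eq_zero_of_dominated hA hdom
        (x := Pi.single i (star (w k)) - Pi.single k (star (w i))) (by
          simp [dotProduct_sub, mul_comm])
      have hj := congrFun h j
      simpa [mulVec_sub, sub_eq_zero, mul_comm] using hj
    have hrow : ∀ j, A j k * w k = A k k * w j := by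
      intro j
      have h := congrArg star (hcol k j)
      simpa only [star_mul', star_star, hA.isHermitian.apply] using h
    have hnn : 0 ≤ A k k := hA.diag_nonneg
    have hre : ((A k k).re : ℂ) = A k k :=
      Complex.ext rfl (Complex.nonneg_iff.mp hnn).2
    have hsq : (Complex.normSq (w k) : ℂ) = w k * star (w k) := (Complex.mul_conj (w k)).symm
    have hpos : 0 < Complex.normSq (w k) := Complex.normSq_pos.mpr hk
    have hle : (A k k).re ≤ Complex.normSq (w k) := by
      have h : 0 ≤ w k * star (w k) - A k k := hdom.diag_nonneg (i := k)
      rw [← hsq, ← hre, ← Complex.ofReal_sub, Complex.zero_le_real] at h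
      exact sub_nonneg.mp h
    refine ⟨(A k k).re / Complex.normSq (w k), div_nonneg (Complex.nonneg_iff.mp hnn).1 hpos.le,
      (div_le_one hpos).mpr hle, ?_⟩
    ext j i
    have hk' : star (w k) ≠ 0 := star_ne_zero.mpr hk
    rw [Matrix.smul_apply, Complex.real_smul, Complex.ofReal_div, hre, hsq, vecMulVec_apply,
      Pi.star_apply, div_mul_eq_mul_div, eq_div_iff (mul_ne_zero hk hk')]
    linear_combination w k * hcol j i + star (w i) * hrow j
end

section
/- Let W be an n×n positive semidefinite complex matrix with rank(W) = r ≥ 1, and let A_1,…,A_m be Hermitian n×n complex matrices with m < r². Then there exists an n×n positive semidefinite complex matrix W' such that rank(W') ≤ r − 1 and Tr(A_i·W') = Tr(A_i·W) for every i = 1,…,m. -/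
/-!
Factor `W = V * Vᴴ` with `V` of size `n × r` (`exists_factor`). The Hermitian `r × r` matrices form
a real vector space of dimension `r²`, and each condition `Tr (Vᴴ * A i * V * Δ) = 0` is a single
real linear equation there, so with fewer than `r²` of them there is a Hermitian solution `Δ ≠ 0`
(`exists_hermitian`). If `c` is an eigenvalue of `Δ` of largest modulus, then `1 - c⁻¹ • Δ` is
positive semidefinite and singular (`exists_scaling`), so that `W' = V * (1 - c⁻¹ • Δ) * Vᴴ` has the
required rank and the same trace values as `W`.
-/

open Matrix
open scoped ComplexOrder

/-- The factor has exactly `rank W` columns: these are the eigenvectors for the nonzero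
eigenvalues, scaled by the square roots of the eigenvalues. -/
lemma exists_factor {n : ℕ} (W : Matrix (Fin n) (Fin n) ℂ) (hW : W.PosSemidef) :
    ∃ (ι : Type) (_ : Fintype ι) (_ : DecidableEq ι) (V : Matrix (Fin n) ι ℂ),
      Fintype.card ι = W.rank ∧ V * Vᴴ = W := by
  classical
  let ev := hW.1.eigenvalues
  let U : Matrix (Fin n) (Fin n) ℂ := hW.1.eigenvectorUnitary
  refine ⟨{i // ev i ≠ 0}, inferInstance, inferInstance,
    Matrix.of fun i j => U i j.1 * ((√(ev j.1) : ℝ) : ℂ),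
    (hW.1.rank_eq_card_non_zero_eigs).symm, ?_⟩
  have hs : W = U * diagonal (fun j => (ev j : ℂ)) * Uᴴ := by
    have := hW.1.spectral_theorem
    rw [Unitary.conjStarAlgAut_apply] at this
    exact this
  conv_rhs => rw [hs]
  ext i k
  rw [Matrix.mul_apply, Matrix.mul_apply]
  simp only [mul_diagonal, conjTranspose_apply, Matrix.of_apply]
  have h1 : ∀ j : {i // ev i ≠ 0},
      U i j.1 * ((√(ev j.1) : ℝ) : ℂ) * star (U k j.1 * ((√(ev j.1) : ℝ) : ℂ))
        = U i j.1 * (ev j.1 : ℂ) * star (U k j.1) := by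
    intro j
    have h2 : ((√(ev j.1) : ℝ) : ℂ) * ((√(ev j.1) : ℝ) : ℂ) = (ev j.1 : ℂ) := by
      rw [← Complex.ofReal_mul, Real.mul_self_sqrt (hW.eigenvalues_nonneg j.1)]
    rw [← h2]
    simp only [star_mul', Complex.star_def, Complex.conj_ofReal]
    ring
  rw [Finset.sum_congr rfl fun j _ => h1 j]
  refine (Finset.sum_subtype (Finset.univ.filter fun j => ev j ≠ 0) (by simp)
    (fun j => U i j * (ev j : ℂ) * star (U k j))).symm.trans ?_
  refine Finset.sum_filter_of_ne fun j _ hj h0 => hj ?_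
  simp [h0]

/-- The real-linear parametrization `M ↦ (1 + i) M + (1 - i) Mᵀ` of the Hermitian matrices by the
real square matrices. -/
noncomputable def hermOfReal (ι : Type) : Matrix ι ι ℝ →ₗ[ℝ] Matrix ι ι ℂ where
  toFun M := Matrix.of fun j k => ⟨M j k + M k j, M j k - M k j⟩
  map_add' M N := by
    ext j k
    apply Complex.ext <;> simp <;> ring
  map_smul' c M := by
    ext j k
    apply Complex.ext <;> simp <;> ring

lemma hermOfReal_isHermitian {ι : Type} (M : Matrix ι ι ℝ) : (hermOfReal ι M).IsHermitian := by
  ext j k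
  apply Complex.ext <;> simp [hermOfReal]
  ring

lemma hermOfReal_ne_zero {ι : Type} {M : Matrix ι ι ℝ} (hM : M ≠ 0) : hermOfReal ι M ≠ 0 := by
  intro h
  apply hM
  ext j k
  have h1 := congrFun (congrFun h j) k
  have hre := congrArg Complex.re h1
  have him := congrArg Complex.im h1
  simp [hermOfReal] at hre him
  simp
  linarith

lemma exists_hermitian {m : ℕ} {ι : Type} [Fintype ι] (B : Fin m → Matrix ι ι ℂ)
    (hB : ∀ i, (B i).IsHermitian) (hm : m < Fintype.card ι ^ 2) :
    ∃ D : Matrix ι ι ℂ, D.IsHermitian ∧ D ≠ 0 ∧ ∀ i, trace (B i * D) = 0 := by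
  classical
  let L : Matrix ι ι ℝ →ₗ[ℝ] (Fin m → ℝ) := LinearMap.pi fun i =>
    Complex.reLm ∘ₗ Matrix.traceLinearMap ι ℝ ℂ ∘ₗ LinearMap.mulLeft ℝ (B i) ∘ₗ hermOfReal ι
  have hker : LinearMap.ker L ≠ ⊥ := by
    apply LinearMap.ker_ne_bot_of_finrank_lt
    rw [Module.finrank_matrix]
    simpa [sq] using hm
  obtain ⟨M, hML, hM⟩ := (Submodule.ne_bot_iff _).1 hker
  refine ⟨hermOfReal ι M, hermOfReal_isHermitian M, hermOfReal_ne_zero hM, fun i => ?_⟩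
  apply Complex.ext
  · exact congrFun hML i
  -- The trace of a product of two Hermitian matrices equals its own conjugate.
  · have h : star (trace (B i * hermOfReal ι M)) = trace (B i * hermOfReal ι M) := by
      rw [← trace_conjTranspose, conjTranspose_mul, (hB i).eq, (hermOfReal_isHermitian M).eq,
        trace_mul_comm]
    exact Complex.conj_eq_iff_im.1 h

lemma exists_scaling {ι : Type} [Fintype ι] [DecidableEq ι] (D : Matrix ι ι ℂ)
    (hD : D.IsHermitian) (h0 : D ≠ 0) :
    ∃ a : ℂ, (1 - a • D).PosSemidef ∧ (1 - a • D).rank < Fintype.card ι := by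
  obtain ⟨i0, hi0⟩ : ∃ i, hD.eigenvalues i ≠ 0 := by
    by_contra! h
    exact h0 (hD.eigenvalues_eq_zero_iff.1 (funext h))
  obtain ⟨k, -, hk⟩ := Finset.exists_max_image Finset.univ (fun i => |hD.eigenvalues i|)
    ⟨i0, Finset.mem_univ _⟩
  have hk0 : 0 < |hD.eigenvalues k| := (abs_pos.2 hi0).trans_le (hk i0 (Finset.mem_univ _))
  let c := hD.eigenvalues k
  have hc : c ≠ 0 := abs_pos.1 hk0
  let U : Matrix ι ι ℂ := hD.eigenvectorUnitary
  have hU : U * Uᴴ = 1 := Unitary.coe_mul_star_self hD.eigenvectorUnitary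
  have hs : D = U * diagonal (fun j => (hD.eigenvalues j : ℂ)) * Uᴴ := by
    have := hD.spectral_theorem
    rw [Unitary.conjStarAlgAut_apply] at this
    exact this
  let d : ι → ℂ := fun j => ((1 - c⁻¹ * hD.eigenvalues j : ℝ) : ℂ)
  have hE : 1 - ((c⁻¹ : ℝ) : ℂ) • D = U * diagonal d * Uᴴ := by
    have hd : diagonal d = 1 - ((c⁻¹ : ℝ) : ℂ) • diagonal (fun j => (hD.eigenvalues j : ℂ)) := by
      rw [← diagonal_one, ← diagonal_smul, diagonal_sub]
      congr 1
      ext j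
      simp [d]
    rw [hd, mul_sub, sub_mul, mul_one, hU, mul_smul_comm, smul_mul_assoc, ← hs]
  refine ⟨((c⁻¹ : ℝ) : ℂ), ?_, ?_⟩
  · rw [hE]
    refine PosSemidef.mul_mul_conjTranspose_same (PosSemidef.diagonal fun j => ?_) U
    have h1 : c⁻¹ * hD.eigenvalues j ≤ 1 := by
      refine (le_abs_self _).trans ?_
      rw [abs_mul, abs_inv, inv_mul_le_iff₀ hk0, mul_one]
      exact hk j (Finset.mem_univ _)
    exact Complex.zero_le_real.2 (sub_nonneg.2 h1)
  · rw [hE]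
    refine ((rank_mul_le_left _ _).trans (rank_mul_le_right _ _)).trans_lt ?_
    rw [rank_diagonal]
    refine Fintype.card_subtype_lt (x := k) ?_
    have : c⁻¹ * hD.eigenvalues k = 1 := inv_mul_cancel₀ hc
    simp only [d, this, sub_self, Complex.ofReal_zero, ne_eq, not_true_eq_false, not_false_eq_true]

/-- Rank-reduction principle iterated in Proposition 3 (Huang–Palomar): if a PSD
matrix `W` has rank `r ≥ 1` and there are fewer than `r²` Hermitian trace
constraints, then the rank can be reduced by at least one while preserving all
constraint values. -/
theorem stmt_13 {n m r : ℕ} (W : Matrix (Fin n) (Fin n) ℂ) (hW : W.PosSemidef)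
    (hr : W.rank = r) (hr1 : 1 ≤ r)
    (A : Fin m → Matrix (Fin n) (Fin n) ℂ) (hA : ∀ i, (A i).IsHermitian)
    (hm : m < r ^ 2) :
    ∃ W' : Matrix (Fin n) (Fin n) ℂ, W'.PosSemidef ∧ W'.rank ≤ r - 1 ∧
      ∀ i, Matrix.trace (A i * W') = Matrix.trace (A i * W) := by
  obtain ⟨ι, _, _, V, hcard, hV⟩ := exists_factor W hW
  rw [hr] at hcard
  obtain ⟨D, hD, hD0, hDt⟩ := exists_hermitian (fun i => Vᴴ * A i * V)
    (fun i => isHermitian_conjTranspose_mul_mul V (hA i)) (by rwa [hcard])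
  obtain ⟨a, hpsd, hrank⟩ := exists_scaling D hD hD0
  refine ⟨V * (1 - a • D) * Vᴴ, hpsd.mul_mul_conjTranspose_same V, ?_, fun i => ?_⟩
  · have := (rank_mul_le_left (V * (1 - a • D)) Vᴴ).trans (rank_mul_le_right _ _)
    omega
  · have h : trace (A i * (V * D * Vᴴ)) = 0 := by
      rw [← hDt i, ← Matrix.mul_assoc, trace_mul_comm]
      simp only [Matrix.mul_assoc]
    rw [Matrix.mul_sub, Matrix.sub_mul, Matrix.mul_one, hV, Matrix.mul_sub, trace_sub,
      Matrix.mul_smul, Matrix.smul_mul, Matrix.mul_smul, trace_smul, h, smul_zero, sub_zero]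
end
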